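/- Let S and A be nonempty finite types, P : S → A → S → ℝ a transition kernel (P s a s' ≥ 0 for all s', and ∑_{s'} P s a s' = 1 for every pair (s,a)), r : S → A → ℝ, and γ a real number with 0 ≤ γ < 1. For a decomposition error ε : S → A → ℝ, write H_ε for the VDN Bellman operator (H_ε Q) s a = ∑_{s'} P s a s' * (r s a + γ * max_{a'} (Q s' a' + ε s' a')) − ε s a. Then for any Q₁, Q₂, ε₁, ε₂ : S → A → ℝ, max_{(s,a)} |(H_{ε₁} Q₁) s a − (H_{ε₂} Q₂) s a| ≤ γ * max_{(s,a)} |(Q₁ s a + ε₁ s a) − (Q₂ s a + ε₂ s a)| + max_{(s,a)} |ε₁ s a − ε₂ s a|; consequently, max_{(s,a)} |(H_{ε₁} Q₁) s a − (H_{ε₂} Q₂) s a| ≤ γ * max_{(s,a)} |Q₁ s a − Q₂ s a| + (1 + γ) * max_{(s,a)} |ε₁ s a − ε₂ s a|. -/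

import Mathlib

/-!
The reward cancels from the difference of two updates, leaving `γ` times the `P s a`-average of the
difference of the greedy values of `Q₁ + ε₁` and `Q₂ + ε₂`, minus `ε₁ - ε₂`. Both the maximum over
actions and the average against `P s a` are nonexpansive for the sup norm.
-/

open Finset

theorem norm_pi_pi_eq_sup' {ι κ E : Type*} [Fintype ι] [Fintype κ] [Nonempty ι] [Nonempty κ]
    [SeminormedAddCommGroup E] (f : ι → κ → E) :
    ‖f‖ = univ.sup' univ_nonempty (fun p : ι × κ => ‖f p.1 p.2‖) := by
  refine eq_of_forall_ge_iff fun c => ?_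
  simp only [pi_norm_le_iff_of_nonempty, sup'_le_iff, mem_univ, forall_const, Prod.forall]

theorem norm_apply_apply_le_norm {ι κ E : Type*} [Fintype ι] [Fintype κ]
    [SeminormedAddCommGroup E] (f : ι → κ → E) (i : ι) (j : κ) : ‖f i j‖ ≤ ‖f‖ :=
  (norm_le_pi_norm (f i) j).trans (norm_le_pi_norm f i)

theorem abs_sup'_sub_sup'_le {ι R : Type*} [AddCommGroup R] [LinearOrder R] [IsOrderedAddMonoid R]
    {s : Finset ι} (hs : s.Nonempty) {f g : ι → R} {c : R} (h : ∀ i ∈ s, |f i - g i| ≤ c) :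
    |s.sup' hs f - s.sup' hs g| ≤ c := by
  simp only [abs_sub_le_iff, sub_le_iff_le_add] at h ⊢
  exact ⟨sup'_le hs f fun i hi => (h i hi).1.trans (by gcongr; exact le_sup' g hi),
    sup'_le hs g fun i hi => (h i hi).2.trans (by gcongr; exact le_sup' f hi)⟩

theorem norm_sum_smul_le_sum_norm_mul_norm {ι 𝕜 E : Type*} [Fintype ι] [SeminormedRing 𝕜]
    [SeminormedAddCommGroup E] [Module 𝕜 E] [IsBoundedSMul 𝕜 E] (w : ι → 𝕜) (f : ι → E) :
    ‖∑ i, w i • f i‖ ≤ (∑ i, ‖w i‖) * ‖f‖ := by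
  rw [sum_mul]
  refine norm_sum_le_of_le _ fun i _ => (norm_smul_le _ _).trans ?_
  gcongr
  exact norm_le_pi_norm f i

section VDNBellman

variable {S A : Type*} [Fintype A] [Nonempty A]

/-- The state value `max_a Q s a` of acting greedily with respect to `Q`. -/
def greedyValue (Q : S → A → ℝ) (s : S) : ℝ :=
  univ.sup' univ_nonempty (Q s)

variable [Fintype S]

theorem norm_greedyValue_sub_greedyValue_le (Q₁ Q₂ : S → A → ℝ) :
    ‖greedyValue Q₁ - greedyValue Q₂‖ ≤ ‖Q₁ - Q₂‖ :=
  (pi_norm_le_iff_of_nonneg (norm_nonneg _)).2 fun s =>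
    abs_sup'_sub_sup'_le univ_nonempty fun a _ => norm_apply_apply_le_norm (Q₁ - Q₂) s a

/-- The VDN Bellman operator `H_ε` with transition weights `P`, reward `r` and discount `γ`, acting
on the approximate global `Q`-function with decomposition error `ε`, so that `Q + ε` is the true
global one. The rows of `P` are arbitrary real weights rather than bundled probability vectors. -/
def vdnBellman (P : S → A → S → ℝ) (r : S → A → ℝ) (γ : ℝ) (ε Q : S → A → ℝ) (s : S) (a : A) : ℝ :=
  ∑ s', P s a s' * (r s a + γ * greedyValue (Q + ε) s') - ε s a

theorem vdnBellman_sub_vdnBellman_apply (P : S → A → S → ℝ) (r : S → A → ℝ) (γ : ℝ)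
    (Q₁ Q₂ ε₁ ε₂ : S → A → ℝ) (s : S) (a : A) :
    vdnBellman P r γ ε₁ Q₁ s a - vdnBellman P r γ ε₂ Q₂ s a =
      γ * ∑ s', P s a s' * (greedyValue (Q₁ + ε₁) - greedyValue (Q₂ + ε₂)) s' -
        (ε₁ - ε₂) s a := by
  simp only [vdnBellman, Pi.sub_apply, mul_add, mul_sub, sum_add_distrib, sum_sub_distrib, mul_sum,
    mul_left_comm γ]
  ring

theorem norm_vdnBellman_sub_vdnBellman_le {P : S → A → S → ℝ}
    (hP : ∀ s a, ∑ s', |P s a s'| ≤ 1) (r : S → A → ℝ) (γ : ℝ) (Q₁ Q₂ ε₁ ε₂ : S → A → ℝ) :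
    ‖vdnBellman P r γ ε₁ Q₁ - vdnBellman P r γ ε₂ Q₂‖ ≤
      |γ| * ‖(Q₁ + ε₁) - (Q₂ + ε₂)‖ + ‖ε₁ - ε₂‖ := by
  have average_nonexpansive (s : S) (a : A) (v : S → ℝ) : |∑ s', P s a s' * v s'| ≤ ‖v‖ :=
    (norm_sum_smul_le_sum_norm_mul_norm (P s a) v).trans
      (mul_le_of_le_one_left (norm_nonneg v) (hP s a))
  refine (pi_norm_le_iff_of_nonneg (by positivity)).2 fun s =>
    (pi_norm_le_iff_of_nonneg (by positivity)).2 fun a => ?_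
  set v := greedyValue (Q₁ + ε₁) - greedyValue (Q₂ + ε₂)
  calc |vdnBellman P r γ ε₁ Q₁ s a - vdnBellman P r γ ε₂ Q₂ s a|
      = |γ * ∑ s', P s a s' * v s' - (ε₁ - ε₂) s a| := by
        rw [vdnBellman_sub_vdnBellman_apply]
    _ ≤ |γ| * |∑ s', P s a s' * v s'| + |(ε₁ - ε₂) s a| := by
        rw [← abs_mul]
        exact abs_sub _ _
    _ ≤ |γ| * ‖v‖ + ‖ε₁ - ε₂‖ := by
        gcongr
        · exact average_nonexpansive s a v
        · exact norm_apply_apply_le_norm (ε₁ - ε₂) s a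
    _ ≤ |γ| * ‖(Q₁ + ε₁) - (Q₂ + ε₂)‖ + ‖ε₁ - ε₂‖ := by
        gcongr
        exact norm_greedyValue_sub_greedyValue_le _ _

theorem vdn_bellman_perturbation_bound_general {P : S → A → S → ℝ}
    (hP : ∀ s a, ∑ s', |P s a s'| ≤ 1) (r : S → A → ℝ) (γ : ℝ) (Q₁ Q₂ ε₁ ε₂ : S → A → ℝ) :
    ‖vdnBellman P r γ ε₁ Q₁ - vdnBellman P r γ ε₂ Q₂‖ ≤
        |γ| * ‖(Q₁ + ε₁) - (Q₂ + ε₂)‖ + ‖ε₁ - ε₂‖ ∧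
      ‖vdnBellman P r γ ε₁ Q₁ - vdnBellman P r γ ε₂ Q₂‖ ≤
        |γ| * ‖Q₁ - Q₂‖ + (1 + |γ|) * ‖ε₁ - ε₂‖ := by
  have bound := norm_vdnBellman_sub_vdnBellman_le hP r γ Q₁ Q₂ ε₁ ε₂
  refine ⟨bound, bound.trans ?_⟩
  calc |γ| * ‖(Q₁ + ε₁) - (Q₂ + ε₂)‖ + ‖ε₁ - ε₂‖
      ≤ |γ| * (‖Q₁ - Q₂‖ + ‖ε₁ - ε₂‖) + ‖ε₁ - ε₂‖ := by
        gcongr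
        rw [add_sub_add_comm]
        exact norm_add_le _ _
    _ = |γ| * ‖Q₁ - Q₂‖ + (1 + |γ|) * ‖ε₁ - ε₂‖ := by ring

end VDNBellman

/-- Quantitative perturbation estimate for VDN Bellman updates
under two decomposition errors. -/
theorem vdn_bellman_perturbation_bound
    {S A : Type*} [Fintype S] [Fintype A] [Nonempty S] [Nonempty A]
    (P : S → A → S → ℝ) (r : S → A → ℝ) (γ : ℝ)
    (hP0 : ∀ s a s', 0 ≤ P s a s')
    (hP1 : ∀ s a, ∑ s', P s a s' = 1)
    (hγ0 : 0 ≤ γ) (hγ1 : γ < 1)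
    (H : (S → A → ℝ) → (S → A → ℝ) → (S → A → ℝ))
    (hH : ∀ (ε Q : S → A → ℝ) (s : S) (a : A), H ε Q s a =
      (∑ s', P s a s' *
        (r s a + γ * Finset.univ.sup' Finset.univ_nonempty
          (fun a' => Q s' a' + ε s' a'))) - ε s a) :
    ∀ Q₁ Q₂ ε₁ ε₂ : S → A → ℝ,
      (Finset.univ.sup' Finset.univ_nonempty
        (fun p : S × A => |H ε₁ Q₁ p.1 p.2 - H ε₂ Q₂ p.1 p.2|)
      ≤ γ * Finset.univ.sup' Finset.univ_nonempty
          (fun p : S × A => |(Q₁ p.1 p.2 + ε₁ p.1 p.2) - (Q₂ p.1 p.2 + ε₂ p.1 p.2)|)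
        + Finset.univ.sup' Finset.univ_nonempty
          (fun p : S × A => |ε₁ p.1 p.2 - ε₂ p.1 p.2|)) ∧
      (Finset.univ.sup' Finset.univ_nonempty
        (fun p : S × A => |H ε₁ Q₁ p.1 p.2 - H ε₂ Q₂ p.1 p.2|)
      ≤ γ * Finset.univ.sup' Finset.univ_nonempty
          (fun p : S × A => |Q₁ p.1 p.2 - Q₂ p.1 p.2|)
        + (1 + γ) * Finset.univ.sup' Finset.univ_nonempty
          (fun p : S × A => |ε₁ p.1 p.2 - ε₂ p.1 p.2|)) := by
  obtain rfl : H = vdnBellman P r γ := by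
    funext ε Q s a
    exact hH ε Q s a
  have hP (s : S) (a : A) : ∑ s', |P s a s'| ≤ 1 := by
    simp only [abs_of_nonneg (hP0 s a _), hP1 s a, le_refl]
  simpa only [norm_pi_pi_eq_sup', Real.norm_eq_abs, Pi.sub_apply, Pi.add_apply,
    abs_of_nonneg hγ0] using
    vdn_bellman_perturbation_bound_general hP r γ
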